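/- arXiv:1609.00283 — 3 statements merged into one kernel-verified Lean document; each statement's English description precedes it below -/
import Mathlib

section
/- Let the weighted digraph be weakly connected, let every edge weight be nonzero, and suppose every vertex has out-degree at least 1. Then the all-ones vector lies in the column space of A (there exists x ∈ ℝ^m with A.mulVec x = 1ₙ), and the null space of A*W is strictly contained in the null space of Le: there exists x ∈ ℝ^m with Le.mulVec x = 0 but (A*W).mulVec x ≠ 0 (while every x with (A*W).mulVec x = 0 also satisfies Le.mulVec x = 0). -/
open Matrix

/-!
The transpose of `E` sends a potential on the vertices to its differences along the edges, so it
kills constants. If every vertex has an outgoing edge, choosing one at each vertex gives a right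
inverse of `A`; as the weights are invertible, `A * W` is surjective too. A preimage of the
all-ones vector under `A * W` is then annihilated by `Le = Eᵀ * (A * W)`, but not by `A * W`.
-/

section Digraph

variable {V ι R : Type*} [DecidableEq V]

/-- The out-incidence matrix of the digraph whose edge `e` starts at `tail e`: column `e` is the
indicator of `tail e`. -/
def outIncMatrix (R : Type*) [Zero R] [One R] (tail : ι → V) : Matrix V ι R :=
  (1 : Matrix V V R).submatrix id tail

/-- The oriented incidence matrix of the digraph whose edge `e` runs from `tail e` to `head e`:
column `e` is the indicator of `tail e` minus that of `head e`, hence zero when `e` is a loop. -/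
def incMatrix (R : Type*) [Ring R] (tail head : ι → V) : Matrix V ι R :=
  outIncMatrix R tail - outIncMatrix R head

/-- The weighted edge Laplacian `Le = Eᵀ * A * W` of a digraph with edge weights `w`. -/
def edgeLaplacian [Ring R] [Fintype V] [Fintype ι] [DecidableEq ι] (tail head : ι → V)
    (w : ι → R) : Matrix ι ι R :=
  (incMatrix R tail head)ᵀ * outIncMatrix R tail * diagonal w

theorem eq_outIncMatrix [Zero R] [One R] {tail : ι → V} {A : Matrix V ι R}
    (hA : ∀ v e, A v e = if v = tail e then 1 else 0) : A = outIncMatrix R tail := by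
  ext v e
  rw [hA, outIncMatrix, submatrix_apply, one_apply, id]

theorem eq_incMatrix [Ring R] {tail head : ι → V} {E : Matrix V ι R}
    (hth : ∀ e, tail e ≠ head e)
    (hE : ∀ v e, E v e = if v = tail e then 1 else if v = head e then -1 else 0) :
    E = incMatrix R tail head := by
  ext v e
  have := hth e
  simp only [hE, incMatrix, outIncMatrix, Matrix.sub_apply, submatrix_apply, one_apply, id]
  grind

theorem outIncMatrix_mulVec_surjective [Semiring R] [Fintype ι] {tail : ι → V}
    (htail : tail.Surjective) : (outIncMatrix R tail).mulVec.Surjective := by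
  classical
  have : Finite V := .of_surjective tail htail
  obtain ⟨out, hout⟩ := htail.hasRightInverse
  refine mulVec_surjective_iff_exists_right_inverse.mpr ⟨(1 : Matrix ι ι R).submatrix id out, ?_⟩
  calc outIncMatrix R tail * (1 : Matrix ι ι R).submatrix id out
      = (outIncMatrix R tail).submatrix id out := mul_submatrix_one (.refl ι) out _
    _ = 1 := by rw [outIncMatrix, submatrix_submatrix, hout.comp_eq_id, Function.comp_id,
      submatrix_id_id]

theorem diagonal_mulVec_surjective [Semiring R] [Fintype ι] [DecidableEq ι] {w : ι → R}
    (hw : ∀ e, IsUnit (w e)) : (diagonal w).mulVec.Surjective := by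
  intro y
  choose x hx using fun e => (hw e).dvd (a := y e)
  exact ⟨x, funext fun e => by rw [mulVec_diagonal, hx]⟩

theorem transpose_outIncMatrix_mulVec [NonAssocSemiring R] [Fintype V] (tail : ι → V)
    (y : V → R) : (outIncMatrix R tail)ᵀ *ᵥ y = y ∘ tail := by
  simpa [outIncMatrix] using submatrix_mulVec_equiv (1 : Matrix V V R) y tail (.refl V)

theorem transpose_incMatrix_mulVec [Ring R] [Fintype V] (tail head : ι → V) (y : V → R) :
    (incMatrix R tail head)ᵀ *ᵥ y = y ∘ tail - y ∘ head := by
  rw [incMatrix, transpose_sub, sub_mulVec, transpose_outIncMatrix_mulVec,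
    transpose_outIncMatrix_mulVec]

theorem edgeLaplacian_mulVec [Ring R] [Fintype V] [Fintype ι] [DecidableEq ι]
    (tail head : ι → V) (w x : ι → R) :
    edgeLaplacian tail head w *ᵥ x =
      (incMatrix R tail head)ᵀ *ᵥ ((outIncMatrix R tail * diagonal w) *ᵥ x) := by
  rw [edgeLaplacian, Matrix.mul_assoc, mulVec_mulVec]

theorem nullspace_AW_ssubset_nullspace_Le_of_all_outdeg_pos_general [Ring R] [Nontrivial R]
    [Fintype V] [Nonempty V] [Fintype ι] [DecidableEq ι] {tail : ι → V} (head : ι → V)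
    (htail : tail.Surjective) {w : ι → R} (hw : ∀ e, IsUnit (w e)) :
    (∃ x, outIncMatrix R tail *ᵥ x = 1) ∧
    (∀ x, (outIncMatrix R tail * diagonal w) *ᵥ x = 0 → edgeLaplacian tail head w *ᵥ x = 0) ∧
    (∃ x, edgeLaplacian tail head w *ᵥ x = 0 ∧
      (outIncMatrix R tail * diagonal w) *ᵥ x ≠ 0) := by
  obtain ⟨z, hz⟩ := outIncMatrix_mulVec_surjective htail (1 : V → R)
  obtain ⟨x, rfl⟩ := diagonal_mulVec_surjective hw z
  rw [mulVec_mulVec] at hz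
  refine ⟨⟨_, (mulVec_mulVec x _ _).trans hz⟩, fun y hy => ?_, x, ?_, ?_⟩
  · rw [edgeLaplacian_mulVec, hy, mulVec_zero]
  · rw [edgeLaplacian_mulVec, hz, transpose_incMatrix_mulVec, Pi.one_comp, Pi.one_comp, sub_self]
  · rw [hz]
    exact one_ne_zero

end Digraph

/-- For a weakly connected weighted digraph with nonzero edge weights
in which every vertex has out-degree at least 1, the all-ones vector lies in the range
of `A`, and the null space of `A * W` is strictly contained in that of `Le`. -/
theorem nullspace_AW_ssubset_nullspace_Le_of_all_outdeg_pos
    (n m : ℕ) (hn : 2 ≤ n) (hm : 1 ≤ m)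
    (tail head : Fin m → Fin n) (hth : ∀ e, tail e ≠ head e)
    (w : Fin m → ℝ) (hw : ∀ e, w e ≠ 0)
    (E : Matrix (Fin n) (Fin m) ℝ)
    (hE : ∀ v e, E v e = if v = tail e then 1 else if v = head e then -1 else 0)
    (A : Matrix (Fin n) (Fin m) ℝ)
    (hA : ∀ v e, A v e = if v = tail e then 1 else 0)
    (W : Matrix (Fin m) (Fin m) ℝ) (hW : W = Matrix.diagonal w)
    (Le : Matrix (Fin m) (Fin m) ℝ) (hLe : Le = Eᵀ * A * W)
    (hconn : ∀ u v : Fin n,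
      Relation.ReflTransGen
        (fun a b => (∃ e, tail e = a ∧ head e = b) ∨ (∃ e, tail e = b ∧ head e = a)) u v)
    (hout : ∀ v : Fin n, ∃ e, tail e = v) :
    (∃ x : Fin m → ℝ, A.mulVec x = fun _ => 1) ∧
    (∀ x : Fin m → ℝ, (A * W).mulVec x = 0 → Le.mulVec x = 0) ∧
    (∃ x : Fin m → ℝ, Le.mulVec x = 0 ∧ (A * W).mulVec x ≠ 0) := by
  have : Nonempty (Fin n) := Fin.pos_iff_nonempty.mp (by lia)
  rw [hLe, hW, eq_incMatrix hth hE, eq_outIncMatrix hA]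
  exact nullspace_AW_ssubset_nullspace_Le_of_all_outdeg_pos_general
    head hout fun e => (hw e).isUnit
end

section
/- Suppose all edge weights are positive and the first n−1 edges form a rooted in-branching with root the vertex indexed n−1. Let Nτ be any m×(m−n+1) real matrix satisfying R * Nτ = 0 and Nτᵀ * Nτ = I (its columns form an orthonormal basis of the null space of R), and let V be the m×m matrix whose first n−1 columns are the columns of Rᵀ and whose remaining columns are those of Nτ. Then V is invertible, and V⁻¹ * Le * V equals the m×m block matrix whose upper-left (n−1)×(n−1) block is Eτᵀ * A * W * Rᵀ, whose upper-right (n−1)×(m−n+1) block is Eτᵀ * A * W * Nτ, and whose bottom m−n+1 rows are zero. (I.e., Le is similar to this block upper-triangular matrix.) -/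
open Matrix

/-! The tree columns `Eτ` span the differences of vertex indicators, hence all columns of `E`, and
adjoining one indicator makes them span everything, so they are independent by counting. Therefore
`E = Eτ * R` and `Le = Rᵀ * (Eτᵀ * A * W)` has its column space inside that of `Rᵀ`. The columns of
`Rᵀ` and `Nτ` are orthogonal, so `V = [Rᵀ Nτ]` is inverted by stacking the least-squares left
inverses of its two blocks, and `V⁻¹ * Rᵀ = [I; 0]` produces the zero rows. -/

section Semiring

variable {α ε ι τ : Type*} [Semiring α] [Fintype τ] [DecidableEq τ]

theorem mulVec_injective_of_submatrix_eq_one {B : Matrix ε τ α} (f : τ → ε)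
    (h : B.submatrix f id = 1) : Function.Injective B.mulVec := by
  have hleft (x : τ → α) : (B *ᵥ x) ∘ f = x :=
    (congrArg (· *ᵥ x) h).trans (one_mulVec x)
  exact Function.LeftInverse.injective (g := (· ∘ f)) hleft

variable [Fintype ε]

theorem mulVec_injective_of_mul_eq_one {L : Matrix τ ε α} {B : Matrix ε τ α} (h : L * B = 1) :
    Function.Injective B.mulVec :=
  Function.LeftInverse.injective (g := L.mulVec) fun x => by rw [mulVec_mulVec, h, one_mulVec]

theorem submatrix_symm_mul_eq_one [DecidableEq ε] [DecidableEq ι] (σ : ι ≃ ε) {L : Matrix ι ε α}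
    {V : Matrix ε ε α} (h : L * V.submatrix id σ = 1) : L.submatrix σ.symm id * V = 1 := by
  have := congrArg (fun M : Matrix ι ι α => M.submatrix σ.symm σ.symm) h
  simpa [submatrix_mul _ _ _ _ _ Function.bijective_id] using this

end Semiring

section LeastSquares

variable {α ε τ κ : Type*} [CommRing α] [Fintype ε] [Fintype τ] [DecidableEq τ]

/-- The least-squares (Moore–Penrose) left inverse of a matrix with independent columns. The inverse
of the Gram matrix is the junk value `0` when its determinant is not a unit. -/
noncomputable def leastSquaresInverse (B : Matrix ε τ α) : Matrix τ ε α :=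
  (Bᵀ * B)⁻¹ * Bᵀ

theorem leastSquaresInverse_mul_eq_zero {B : Matrix ε τ α} {N : Matrix ε κ α} (h : Bᵀ * N = 0) :
    leastSquaresInverse B * N = 0 := by
  rw [leastSquaresInverse, Matrix.mul_assoc, h, Matrix.mul_zero]

end LeastSquares

section OrderedField

variable {K ν ε τ κ : Type*} [Field K] [LinearOrder K] [IsStrictOrderedRing K] [Fintype τ]

theorem leastSquaresInverse_mul_self [DecidableEq τ] [Fintype ε] {B : Matrix ε τ K}
    (hB : Function.Injective B.mulVec) : leastSquaresInverse B * B = 1 := by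
  have hgram : IsUnit (Bᵀ * B) := by
    rw [← mulVec_injective_iff_isUnit, ← coe_mulVecLin, ← LinearMap.ker_eq_bot,
      ker_mulVecLin_transpose_mul_self]
    exact LinearMap.ker_eq_bot.2 hB
  rw [leastSquaresInverse, Matrix.mul_assoc,
    nonsing_inv_mul _ ((isUnit_iff_isUnit_det _).1 hgram)]

theorem eq_mul_of_submatrix_eq_fromCols [DecidableEq τ] [Fintype ν] (σ : τ ⊕ κ ≃ ε)
    {E : Matrix ν ε K} {B : Matrix ν τ K} {C : Matrix ν κ K} {R : Matrix τ ε K}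
    (hE : E.submatrix id σ = fromCols B C)
    (hR : R.submatrix id σ = fromCols 1 (leastSquaresInverse B * C))
    (hB : Function.Injective B.mulVec) (hBC : ∃ X : Matrix τ κ K, B * X = C) : E = B * R := by
  have hproj : B * (leastSquaresInverse B * C) = C := by
    obtain ⟨X, rfl⟩ := hBC
    rw [← Matrix.mul_assoc (leastSquaresInverse B), leastSquaresInverse_mul_self hB,
      Matrix.one_mul]
  have hsub : E.submatrix id σ = (B * R).submatrix id σ := by
    rw [submatrix_mul _ _ _ _ _ Function.bijective_id, submatrix_id_id, hE, hR, mul_fromCols,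
      Matrix.mul_one, hproj]
  ext v e
  simpa using congrFun₂ hsub v (σ.symm e)

theorem isUnit_and_submatrix_conj_eq_fromBlocks [Fintype ε] [DecidableEq ε] [Fintype κ]
    (σ : τ ⊕ κ ≃ ε) {B : Matrix ε τ K} {N : Matrix ε κ K} {V : Matrix ε ε K}
    (hV : V.submatrix id σ = fromCols B N) (hB : Function.Injective B.mulVec)
    (hN : Function.Injective N.mulVec) (hBN : Bᵀ * N = 0) (Q : Matrix τ ε K) :
    IsUnit V ∧ (V⁻¹ * (B * Q) * V).submatrix σ σ = fromBlocks (Q * B) (Q * N) 0 0 := by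
  classical
  let L := fromRows (leastSquaresInverse B) (leastSquaresInverse N)
  have hNB : Nᵀ * B = 0 := by simpa using congrArg transpose hBN
  have hLB : L * B = fromRows 1 0 := by
    rw [fromRows_mul, leastSquaresInverse_mul_self hB, leastSquaresInverse_mul_eq_zero hNB]
  have hLN : L * N = fromRows 0 1 := by
    rw [fromRows_mul, leastSquaresInverse_mul_self hN, leastSquaresInverse_mul_eq_zero hBN]
  have hLV : L.submatrix σ.symm id * V = 1 := by
    apply submatrix_symm_mul_eq_one
    rw [hV, mul_fromCols, hLB, hLN, fromCols_fromRows_eq_fromBlocks, fromBlocks_one]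
  refine ⟨IsUnit.of_mul_eq_one_right _ hLV, ?_⟩
  calc (V⁻¹ * (B * Q) * V).submatrix σ σ
      = L * (B * Q) * V.submatrix id σ := by
        simp [inv_eq_left_inv hLV, submatrix_mul _ _ _ _ _ Function.bijective_id]
    _ = (fromRows 1 0 : Matrix (τ ⊕ κ) τ K) * fromCols (Q * B) (Q * N) := by
        rw [← Matrix.mul_assoc, hLB, Matrix.mul_assoc, hV, mul_fromCols]
    _ = fromBlocks (Q * B) (Q * N) 0 0 := by simp

end OrderedField

section Incidence

variable {K ν ε τ κ : Type*}

/-- The relation of being joined by a directed edge, in the multigraph with edge set `ε` and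
endpoint maps `tail` and `head`; its equivalence closure is connectedness. -/
def EdgeStep (tail head : ε → ν) (a b : ν) : Prop :=
  ∃ e, tail e = a ∧ head e = b

variable [DecidableEq ν]

/-- The oriented incidence matrix of the multigraph with endpoint maps `tail` and `head`, whose
columns are differences of vertex indicators; a loop gives a zero column. -/
def orientedIncMatrix (K : Type*) [Ring K] (tail head : ε → ν) : Matrix ν ε K :=
  .of fun v e => (Pi.single (tail e) 1 - Pi.single (head e) 1 : ν → K) v

theorem orientedIncMatrix_apply_of_ne [Ring K] {tail head : ε → ν} {e : ε}
    (h : tail e ≠ head e) (v : ν) :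
    orientedIncMatrix K tail head v e =
      if v = tail e then 1 else if v = head e then -1 else 0 := by
  simp only [orientedIncMatrix, of_apply, Pi.sub_apply, Pi.single_apply]
  grind

theorem exists_orientedIncMatrix_mulVec_eq [Ring K] [Fintype τ] {tail head : τ → ν} {u v : ν}
    (huv : Relation.EqvGen (EdgeStep tail head) u v) :
    ∃ c, orientedIncMatrix K tail head *ᵥ c = Pi.single u 1 - Pi.single v 1 := by
  classical
  induction huv with
  | rel _ _ h =>
    obtain ⟨e, rfl, rfl⟩ := h
    exact ⟨Pi.single e 1, mulVec_single_one _ _⟩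
  | refl => exact ⟨0, by rw [mulVec_zero, sub_self]⟩
  | symm _ _ _ ih =>
    obtain ⟨c, hc⟩ := ih
    exact ⟨-c, by rw [mulVec_neg, hc, neg_sub]⟩
  | trans _ _ _ _ _ ihab ihbc =>
    obtain ⟨c, hc⟩ := ihab
    obtain ⟨d, hd⟩ := ihbc
    exact ⟨c + d, by rw [mulVec_add, hc, hd, sub_add_sub_cancel]⟩

theorem exists_orientedIncMatrix_mul_eq [Ring K] [Fintype τ] {tail head : τ → ν} {r : ν}
    (hr : ∀ v, Relation.EqvGen (EdgeStep tail head) v r) (tail' head' : κ → ν) :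
    ∃ X : Matrix τ κ K, orientedIncMatrix K tail head * X = orientedIncMatrix K tail' head' := by
  have hcol (j : κ) := exists_orientedIncMatrix_mulVec_eq (K := K)
    ((hr (tail' j)).trans _ _ _ ((hr (head' j)).symm _ _))
  choose c hc using hcol
  exact ⟨.of fun i j => c j i, Matrix.ext fun v j => congrFun (hc j) v⟩

theorem orientedIncMatrix_mulVec_injective [Field K] [Fintype ν] [Fintype τ] {tail head : τ → ν}
    {r : ν} (hr : ∀ v, Relation.EqvGen (EdgeStep tail head) v r)
    (hcard : Fintype.card τ + 1 = Fintype.card ν) :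
    Function.Injective (orientedIncMatrix K tail head).mulVec := by
  let f : (τ → K) × K →ₗ[K] (ν → K) :=
    (orientedIncMatrix K tail head).mulVecLin.coprod (LinearMap.toSpanSingleton K _ (Pi.single r 1))
  have hsurj : Function.Surjective f := by
    rw [← LinearMap.range_eq_top, eq_top_iff, ← (Pi.basisFun K ν).span_eq, Submodule.span_le]
    rintro _ ⟨v, rfl⟩
    obtain ⟨c, hc⟩ := exists_orientedIncMatrix_mulVec_eq (K := K) (hr v)
    exact ⟨(c, 1), by simp [f, hc]⟩
  have hinj : Function.Injective f :=
    (LinearMap.injective_iff_surjective_of_finrank_eq_finrank (by simpa using hcard)).2 hsurj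
  intro x y hxy
  have hf : f (x, 0) = f (y, 0) := by simpa [f] using hxy
  exact congrArg Prod.fst (hinj hf)

end Incidence

/-- The edges `σ (inl _)` form a spanning tree, of any orientation; `P` stands for `A * W`. -/
theorem edgeLaplacian_similar_block_triangular_general {K ν ε τ κ : Type*}
    [Field K] [LinearOrder K] [IsStrictOrderedRing K] [Fintype ν] [DecidableEq ν]
    [Fintype ε] [DecidableEq ε] [Fintype τ] [DecidableEq τ] [Fintype κ]
    (σ : τ ⊕ κ ≃ ε) {tail head : ε → ν} {r : ν}
    (hr : ∀ v, Relation.EqvGen (EdgeStep (tail ∘ σ ∘ Sum.inl) (head ∘ σ ∘ Sum.inl)) v r)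
    (hcard : Fintype.card τ + 1 = Fintype.card ν)
    {E : Matrix ν ε K} (hE : E = orientedIncMatrix K tail head)
    {Eτ : Matrix ν τ K} (hEτ : Eτ = E.submatrix id (σ ∘ Sum.inl))
    {Ec : Matrix ν κ K} (hEc : Ec = E.submatrix id (σ ∘ Sum.inr))
    {R : Matrix τ ε K} (hR : R.submatrix id σ = fromCols 1 (leastSquaresInverse Eτ * Ec))
    {N : Matrix ε κ K} (hRN : R * N = 0) (hN : Function.Injective N.mulVec)
    {V : Matrix ε ε K} (hV : V.submatrix id σ = fromCols Rᵀ N) (P : Matrix ν ε K) :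
    IsUnit V ∧ (V⁻¹ * (Eᵀ * P) * V).submatrix σ σ =
      fromBlocks (Eτᵀ * P * Rᵀ) (Eτᵀ * P * N) 0 0 := by
  have hEτ_inc : Eτ = orientedIncMatrix K (tail ∘ σ ∘ Sum.inl) (head ∘ σ ∘ Sum.inl) := by
    rw [hEτ, hE]; rfl
  have hEc_inc : Ec = orientedIncMatrix K (tail ∘ σ ∘ Sum.inr) (head ∘ σ ∘ Sum.inr) := by
    rw [hEc, hE]; rfl
  have hEτ_inj : Function.Injective Eτ.mulVec :=
    hEτ_inc ▸ orientedIncMatrix_mulVec_injective hr hcard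
  have hspan : ∃ X : Matrix τ κ K, Eτ * X = Ec :=
    hEτ_inc ▸ hEc_inc ▸ exists_orientedIncMatrix_mul_eq hr _ _
  have hsplit : E.submatrix id σ = fromCols Eτ Ec := by
    rw [hEτ, hEc]; exact (fromCols_toCols (E.submatrix id σ)).symm
  have hfactor : E = Eτ * R := eq_mul_of_submatrix_eq_fromCols σ hsplit hR hEτ_inj hspan
  have hRT_inj : Function.Injective Rᵀ.mulVec := by
    refine mulVec_injective_of_submatrix_eq_one (σ ∘ Sum.inl) ?_
    calc Rᵀ.submatrix (σ ∘ Sum.inl) id = (R.submatrix id σ).toCols₁ᵀ := rfl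
      _ = 1 := by rw [hR, toCols₁_fromCols, transpose_one]
  rw [hfactor, transpose_mul, Matrix.mul_assoc Rᵀ]
  exact isUnit_and_submatrix_conj_eq_fromBlocks σ hV hRT_inj hN (by rwa [transpose_transpose]) _

section FinSplit

variable {α ι : Type*} {p m : ℕ}

/-- The splitting of `Fin m` into its first `p` elements and the remaining `m - p`. -/
def finSplitEquiv (h : p ≤ m) : Fin p ⊕ Fin (m - p) ≃ Fin m :=
  finSumFinEquiv.trans (finCongr (Nat.add_sub_of_le h))

theorem submatrix_finSplitEquiv_eq_fromCols (h : p ≤ m) {M : Matrix ι (Fin m) α}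
    {M₁ : Matrix ι (Fin p) α} {M₂ : Matrix ι (Fin (m - p)) α}
    (hM : ∀ i j, M i j =
      if hj : j.val < p then M₁ i ⟨j.val, hj⟩ else M₂ i ⟨j.val - p, by have := j.2; omega⟩) :
    M.submatrix id (finSplitEquiv h) = fromCols M₁ M₂ := by
  ext i (j | j) <;> simp [hM, finSplitEquiv]

theorem apply_eq_dite_of_submatrix_finSplitEquiv_eq [Zero α] (h : p ≤ m)
    {M : Matrix (Fin m) (Fin m) α} {M₁ : Matrix (Fin p) (Fin p) α}
    {M₂ : Matrix (Fin p) (Fin (m - p)) α}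
    (hM : M.submatrix (finSplitEquiv h) (finSplitEquiv h) = fromBlocks M₁ M₂ 0 0)
    (i j : Fin m) :
    M i j =
      if hi : i.val < p then
        (if hj : j.val < p then M₁ ⟨i.val, hi⟩ ⟨j.val, hj⟩
         else M₂ ⟨i.val, hi⟩ ⟨j.val - p, by have := j.2; omega⟩)
      else 0 := by
  obtain ⟨i, rfl⟩ := (finSplitEquiv h).surjective i
  obtain ⟨j, rfl⟩ := (finSplitEquiv h).surjective j
  have hij := congrFun₂ hM i j
  rcases i with i | i <;> rcases j with j | j <;> simpa [finSplitEquiv] using hij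

end FinSplit

/-- For a weighted digraph with positive weights whose first `n-1` edges
form a rooted in-branching with root the vertex `n-1`, the edge Laplacian
`Le = Eᵀ * A * W` is similar, via the matrix `V = [Rᵀ Nτ]` (where the columns of `Nτ`
form an orthonormal basis of the null space of `R`), to the block upper-triangular
matrix with top blocks `Eτᵀ * A * W * Rᵀ`, `Eτᵀ * A * W * Nτ` and zero bottom rows. -/
theorem edgeLaplacian_similar_block_triangular
    (n m : ℕ) (hn : 2 ≤ n) (hm : 1 ≤ m) (hmn : n - 1 ≤ m)
    (tail head : Fin m → Fin n) (hth : ∀ e, tail e ≠ head e)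
    (w : Fin m → ℝ) (hw : ∀ e, 0 < w e)
    (E : Matrix (Fin n) (Fin m) ℝ)
    (hE : ∀ v e, E v e = if v = tail e then 1 else if v = head e then -1 else 0)
    (A : Matrix (Fin n) (Fin m) ℝ)
    (hA : ∀ v e, A v e = if v = tail e then 1 else 0)
    (W : Matrix (Fin m) (Fin m) ℝ) (hW : W = Matrix.diagonal w)
    (Le : Matrix (Fin m) (Fin m) ℝ) (hLe : Le = Eᵀ * A * W)
    (root : Fin n) (hroot : root = ⟨n - 1, by omega⟩)
    -- the first n-1 edges form a rooted in-branching with root `root`: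
    (hinj : Function.Injective (fun i : Fin (n - 1) => tail ⟨i.val, lt_of_lt_of_le i.2 hmn⟩))
    (hnotroot : ∀ i : Fin (n - 1), tail ⟨i.val, lt_of_lt_of_le i.2 hmn⟩ ≠ root)
    (hsurj : ∀ v : Fin n, v ≠ root → ∃ i : Fin (n - 1), tail ⟨i.val, lt_of_lt_of_le i.2 hmn⟩ = v)
    (hreach : ∀ v : Fin n, Relation.ReflTransGen
      (fun a b => ∃ e : Fin m, e.val < n - 1 ∧ tail e = a ∧ head e = b) v root)
    (Eτ : Matrix (Fin n) (Fin (n - 1)) ℝ)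
    (hEτ : Eτ = E.submatrix id (fun i : Fin (n - 1) => ⟨i.val, lt_of_lt_of_le i.2 hmn⟩))
    (Ec : Matrix (Fin n) (Fin (m - (n - 1))) ℝ)
    (hEc : Ec = E.submatrix id
      (fun j : Fin (m - (n - 1)) => ⟨n - 1 + j.val, by have := j.2; omega⟩))
    (Tτ : Matrix (Fin (n - 1)) (Fin (m - (n - 1))) ℝ)
    (hTτ : Tτ = (Eτᵀ * Eτ)⁻¹ * Eτᵀ * Ec)
    (R : Matrix (Fin (n - 1)) (Fin m) ℝ)
    (hR : ∀ (i : Fin (n - 1)) (j : Fin m), R i j =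
      if h : j.val < n - 1 then (if i.val = j.val then 1 else 0)
      else Tτ i ⟨j.val - (n - 1), by have := j.2; omega⟩)
    (Nτ : Matrix (Fin m) (Fin (m - (n - 1))) ℝ)
    (hN1 : R * Nτ = 0) (hN2 : Nτᵀ * Nτ = 1)
    (V : Matrix (Fin m) (Fin m) ℝ)
    (hV : ∀ (i j : Fin m), V i j =
      if h : j.val < n - 1 then Rᵀ i ⟨j.val, h⟩
      else Nτ i ⟨j.val - (n - 1), by have := j.2; omega⟩) :
    IsUnit V ∧
    ∀ (i j : Fin m), (V⁻¹ * Le * V) i j =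
      if hi : i.val < n - 1 then
        (if hj : j.val < n - 1 then (Eτᵀ * A * W * Rᵀ) ⟨i.val, hi⟩ ⟨j.val, hj⟩
         else (Eτᵀ * A * W * Nτ) ⟨i.val, hi⟩ ⟨j.val - (n - 1), by have := j.2; omega⟩)
      else 0 := by
  subst hTτ hLe
  let σ := finSplitEquiv hmn
  have hconn (v : Fin n) :
      Relation.EqvGen (EdgeStep (tail ∘ σ ∘ Sum.inl) (head ∘ σ ∘ Sum.inl)) v root :=
    Relation.EqvGen.reflTransGen_le_eqvGen _ _ _ <| Relation.ReflTransGen.mono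
      (fun _ _ ⟨e, he, hab⟩ => ⟨⟨e.val, he⟩, hab⟩) v root (hreach v)
  have hcard : Fintype.card (Fin (n - 1)) + 1 = Fintype.card (Fin n) := by
    simp only [Fintype.card_fin]; omega
  have hEinc : E = orientedIncMatrix ℝ tail head :=
    Matrix.ext fun v e => (hE v e).trans (orientedIncMatrix_apply_of_ne (hth e) v).symm
  have hRsplit : R.submatrix id σ = fromCols 1 (leastSquaresInverse Eτ * Ec) :=
    submatrix_finSplitEquiv_eq_fromCols hmn fun i j => by
      simp only [hR, one_apply, Fin.ext_iff]; rfl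
  have hVsplit : V.submatrix id σ = fromCols Rᵀ Nτ := submatrix_finSplitEquiv_eq_fromCols hmn hV
  obtain ⟨hVunit, hblocks⟩ := edgeLaplacian_similar_block_triangular_general σ hconn hcard hEinc
    hEτ hEc hRsplit hN1 (mulVec_injective_of_mul_eq_one hN2) hVsplit (A * W)
  simp only [← Matrix.mul_assoc] at hblocks ⊢
  exact ⟨hVunit, apply_eq_dite_of_submatrix_finSplitEquiv_eq hmn hblocks⟩
end

section
/- Suppose all edge weights are positive, the digraph has a globally reachable vertex, and the first n−1 edges form a rooted in-branching with root the vertex indexed n−1. Then the (n−1)×(n−1) reduced edge Laplacian Eτᵀ * A * W * Rᵀ is invertible, and every eigenvalue λ ∈ ℂ of Eτᵀ * A * W * Rᵀ (viewed as a complex matrix) has strictly positive real part. -/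
open Matrix

/-!
Write `L = A W Eᵀ` for the out-degree Laplacian. Since `Eτ R = E`, it is intertwined with the
reduced edge Laplacian `M = Eτᵀ A W Rᵀ` by `M Eτᵀ = Eτᵀ L`, and `Eτᵀ` is onto with kernel the
constants. So an eigenvector of `M` for `μ` is `Eτᵀ y` for a nonconstant `y` with `L y - μ y`
constant.

Choose `u`, `v` with `d = y u - y v` of maximal norm. For the real inner product on `ℂ`, replacing
`y u` or `y v` by the value at an out-neighbour can only decrease `⟪d, y u - y v⟫`, hence
`0 ≤ ⟪d, L y u - L y v⟫ = Re μ * ‖d‖ ^ 2`. If `Re μ ≤ 0` (in particular if `μ = 0`), equality forces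
`y` to keep the value `y u` along every path of positive edges from `u`, and the value `y v` along
every such path from `v`. Both reach a globally reachable vertex, so `d = 0`, contradicting that `y`
is not constant.
-/

section LinearAlgebra

variable {m n ι K : Type*} [Fintype m] [Fintype n]

theorem isUnit_transpose_mul_self_of_surjective [DecidableEq n] (B : Matrix m n ℝ)
    (hB : Function.Surjective (Bᵀ *ᵥ ·)) : IsUnit (Bᵀ * B) := by
  rw [← mulVec_injective_iff_isUnit]
  refine (injective_iff_map_eq_zero (Bᵀ * B).mulVecLin).mpr fun x hx => ?_
  obtain ⟨y, rfl⟩ := hB x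
  have hBx : B *ᵥ Bᵀ *ᵥ y = 0 := by
    rwa [← LinearMap.mem_ker, ker_mulVecLin_transpose_mul_self] at hx
  rw [← dotProduct_self_eq_zero, dotProduct_mulVec, vecMul_transpose, hBx, zero_dotProduct]

theorem mul_nonsing_inv_gram_mul_eq [DecidableEq n] [CommRing K] (B : Matrix m n K)
    (C : Matrix m ι K) (hB : IsUnit (Bᵀ * B)) (hBC : ∀ z, Bᵀ *ᵥ z = 0 → Cᵀ *ᵥ z = 0) :
    B * ((Bᵀ * B)⁻¹ * Bᵀ * C) = C := by
  classical
  have hB' : IsUnit (Bᵀ * B).det := (isUnit_iff_isUnit_det _).mp hB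
  have hproj : Cᵀ * (B * (Bᵀ * B)⁻¹ * Bᵀ) = Cᵀ := by
    refine ext_of_mulVec_single fun v => ?_
    rw [← sub_eq_zero, ← mulVec_mulVec, ← mulVec_sub]
    apply hBC
    rw [mulVec_sub, mulVec_mulVec, ← Matrix.mul_assoc, ← Matrix.mul_assoc, mul_nonsing_inv _ hB',
      Matrix.one_mul, sub_self]
  have htranspose := congrArg transpose hproj
  simp only [transpose_mul, transpose_transpose, transpose_nonsing_inv] at htranspose
  simpa only [Matrix.mul_assoc] using htranspose

theorem mul_eq_of_column_blocks [DecidableEq n] [CommRing K] {ε κ : Type*} {τ : n → ε} {c : κ → ε}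
    (hτc : ∀ e, e ∈ Set.range τ ∨ e ∈ Set.range c) {B : Matrix m n K} {E : Matrix m ε K}
    (hBE : B = E.submatrix id τ) (hB : IsUnit (Bᵀ * B))
    (hker : ∀ z, Bᵀ *ᵥ z = 0 → Eᵀ *ᵥ z = 0) {R : Matrix n ε K} (hRτ : R.submatrix id τ = 1)
    (hRc : R.submatrix id c = (Bᵀ * B)⁻¹ * Bᵀ * E.submatrix id c) : B * R = E := by
  have hτ : (B * R).submatrix id τ = E.submatrix id τ := by
    rw [← hBE, submatrix_mul _ _ id id τ Function.bijective_id, hRτ, submatrix_id_id,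
      Matrix.mul_one]
  have hc : (B * R).submatrix id c = E.submatrix id c := by
    rw [submatrix_mul _ _ id id c Function.bijective_id, hRc, submatrix_id_id]
    exact mul_nonsing_inv_gram_mul_eq B _ hB fun z hz => funext fun j => congrFun (hker z hz) (c j)
  ext v e
  rcases hτc e with ⟨i, rfl⟩ | ⟨j, rfl⟩
  · exact congrFun₂ hτ v i
  · exact congrFun₂ hc v j

theorem mulVec_surjective_of_ker_le_const [Fintype ι] [Field K] (B : Matrix ι n K)
    (hcard : Fintype.card n = Fintype.card ι + 1) (r : n)
    (hB : ∀ z, B *ᵥ z = 0 → ∀ v, z v = z r) : Function.Surjective (B *ᵥ ·) := by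
  have hker : Module.finrank K (LinearMap.ker B.mulVecLin) ≤ 1 := by
    let evalRoot : LinearMap.ker B.mulVecLin →ₗ[K] K :=
      LinearMap.proj r ∘ₗ (LinearMap.ker B.mulVecLin).subtype
    have hinj : Function.Injective evalRoot :=
      (injective_iff_map_eq_zero evalRoot).mpr fun z hz =>
        Subtype.ext <| funext fun v => (hB z z.2 v).trans hz
    simpa using LinearMap.finrank_le_finrank_of_injective hinj
  have hrank := B.mulVecLin.finrank_range_add_finrank_ker
  rw [Module.finrank_fintype_fun_eq_card] at hrank
  have hrange : LinearMap.range B.mulVecLin = ⊤ := by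
    apply Submodule.eq_top_of_finrank_eq
    have hle := (LinearMap.range B.mulVecLin).finrank_le
    rw [Module.finrank_fintype_fun_eq_card] at hle ⊢
    omega
  exact LinearMap.range_eq_top.mp hrange

theorem isUnit_of_forall_eigenvalue_re_pos [DecidableEq n] (M : Matrix n n ℝ)
    (hM : ∀ μ : ℂ, (∃ x : n → ℂ, x ≠ 0 ∧ M.map Complex.ofReal *ᵥ x = μ • x) → 0 < μ.re) :
    IsUnit M := by
  rw [isUnit_iff_isUnit_det, isUnit_iff_ne_zero]
  intro hdet
  have hdet' : (M.map Complex.ofReal).det = 0 :=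
    (Complex.ofRealHom.map_det M).symm.trans (by rw [hdet, map_zero])
  obtain ⟨x, hx0, hx⟩ := exists_mulVec_eq_zero_iff.mpr hdet'
  exact (hM 0 ⟨x, hx0, by rw [hx, zero_smul]⟩).false

end LinearAlgebra

theorem eq_of_reflTransGen {α β : Type*} {r : α → α → Prop} {f : α → β}
    (hf : ∀ a b, r a b → f a = f b) {a b : α} (hab : Relation.ReflTransGen r a b) : f a = f b := by
  simpa only [Relation.reflTransGen_eq_self] using hab.lift (p := Eq) f hf

section OutLaplacian

variable {V ε H : Type*} [Fintype ε] [DecidableEq V]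

/-- The out-degree Laplacian of a weighted digraph, as an operator on vertex functions with values
in an arbitrary module; a vertex only sees the edges that leave it. -/
def outLaplacian {R : Type*} [Ring R] [AddCommGroup H] [Module R H] (tail head : ε → V) (w : ε → R)
    (y : V → H) (v : V) : H :=
  ∑ e with tail e = v, w e • (y v - y (head e))

variable [NormedAddCommGroup H] [InnerProductSpace ℝ H] {tail head : ε → V} {w : ε → ℝ}

theorem norm_sub_sq_le_two_mul_inner_sub {b d : H} (h : ‖b‖ ≤ ‖d‖) :
    ‖d - b‖ ^ 2 ≤ 2 * inner ℝ d (d - b) := by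
  rw [norm_sub_sq_real, inner_sub_right, real_inner_self_eq_norm_sq]
  linarith [pow_le_pow_left₀ (norm_nonneg b) h 2]

theorem real_inner_complex_mul_self (d μ : ℂ) : inner ℝ d (μ * d) = μ.re * ‖d‖ ^ 2 := by
  rw [Complex.inner, mul_assoc, Complex.mul_conj', ← Complex.ofReal_pow, Complex.re_mul_ofReal]

theorem sum_mul_norm_sq_le_inner_outLaplacian (hw : ∀ e, 0 ≤ w e) {y : V → H} {u v : V}
    (hmax : ∀ a, ‖y a - y v‖ ≤ ‖y u - y v‖) :
    ∑ e with tail e = u, w e * ‖y u - y (head e)‖ ^ 2 ≤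
      2 * inner ℝ (y u - y v) (outLaplacian tail head w y u) := by
  rw [outLaplacian, inner_sum, Finset.mul_sum]
  refine Finset.sum_le_sum fun e _ => ?_
  have hedge := norm_sub_sq_le_two_mul_inner_sub (hmax (head e))
  rw [sub_sub_sub_cancel_right] at hedge
  rw [real_inner_smul_right, mul_left_comm]
  exact mul_le_mul_of_nonneg_left hedge (hw e)

theorem eq_head_of_inner_outLaplacian_nonpos (hw : ∀ e, 0 ≤ w e) {y : V → H} {u v : V}
    (hmax : ∀ a b, ‖y a - y b‖ ≤ ‖y u - y v‖)
    (hy : inner ℝ (y u - y v) (outLaplacian tail head w y u - outLaplacian tail head w y v) ≤ 0)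
    {e : ε} (he : tail e = u) (hwe : 0 < w e) : y (head e) = y u := by
  have hu := sum_mul_norm_sq_le_inner_outLaplacian (tail := tail) (head := head) hw
    fun a => hmax a v
  have hv := sum_mul_norm_sq_le_inner_outLaplacian (tail := tail) (head := head) hw
    (y := y) (u := v) (v := u) fun a => norm_sub_rev (y v) (y u) ▸ hmax a u
  rw [← neg_sub (y u) (y v), inner_neg_left] at hv
  rw [inner_sub_right] at hy
  have hnonneg : ∀ a e, 0 ≤ w e * ‖y a - y (head e)‖ ^ 2 := fun a e =>
    mul_nonneg (hw e) (sq_nonneg _)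
  have hterm : w e * ‖y u - y (head e)‖ ^ 2 ≤ ∑ e with tail e = u, w e * ‖y u - y (head e)‖ ^ 2 :=
    Finset.single_le_sum (fun e _ => hnonneg u e) (by simp [he])
  have hv_nonneg : 0 ≤ ∑ e with tail e = v, w e * ‖y v - y (head e)‖ ^ 2 :=
    Finset.sum_nonneg fun e _ => hnonneg v e
  have hzero : w e * ‖y u - y (head e)‖ ^ 2 = 0 := le_antisymm (by linarith) (hnonneg u e)
  simpa [hwe.ne', sub_eq_zero, eq_comm] using hzero

theorem eq_of_inner_outLaplacian_nonpos [Finite V] (hw : ∀ e, 0 ≤ w e) {r : V}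
    (hr : ∀ u, Relation.ReflTransGen (fun a b => ∃ e, 0 < w e ∧ tail e = a ∧ head e = b) u r)
    {y : V → H}
    (hy : ∀ u v, inner ℝ (y u - y v)
      (outLaplacian tail head w y u - outLaplacian tail head w y v) ≤ 0) (a b : V) :
    y a = y b := by
  have : Nonempty (V × V) := ⟨(r, r)⟩
  obtain ⟨⟨u, v⟩, huv⟩ := Finite.exists_max fun p : V × V => ‖y p.1 - y p.2‖
  have hmax : ∀ a b, ‖y a - y b‖ ≤ ‖y u - y v‖ := fun a b => huv (a, b)
  have value_root : ∀ u v, (∀ a b, ‖y a - y b‖ ≤ ‖y u - y v‖) → y r = y u := by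
    intro u v hmax
    replace hr := hr u
    induction hr with
    | refl => rfl
    | tail _ hedge ih =>
      obtain ⟨e, hwe, rfl, rfl⟩ := hedge
      rw [← ih] at hmax ⊢
      exact eq_head_of_inner_outLaplacian_nonpos hw hmax (hy _ _) rfl hwe
  have hu : y r = y u := value_root u v hmax
  have hv : y r = y v := value_root v u fun a b => norm_sub_rev (y v) (y u) ▸ hmax a b
  have hab := hmax a b
  rwa [← hu, ← hv, sub_self, norm_zero, norm_le_zero_iff, sub_eq_zero] at hab

end OutLaplacian

section Incidence

variable {V ε ι : Type*} [DecidableEq V]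

/-- The out-incidence matrix: column `e` is the indicator of the vertex `tail e`. -/
def outIncidenceMatrix (K : Type*) [Zero K] [One K] (tail : ε → V) : Matrix V ε K :=
  of fun v e => if v = tail e then 1 else 0

/-- The incidence matrix of a digraph, with entry `1` at the tail and `-1` at the head of an edge;
the column of a loop is zero. -/
def incidenceMatrix (K : Type*) [Ring K] (tail head : ε → V) : Matrix V ε K :=
  outIncidenceMatrix K tail - outIncidenceMatrix K head

theorem eq_incidenceMatrix {K : Type*} [Ring K] {tail head : ε → V} (hth : ∀ e, tail e ≠ head e)
    {E : Matrix V ε K}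
    (hE : ∀ v e, E v e = if v = tail e then 1 else if v = head e then -1 else 0) :
    E = incidenceMatrix K tail head := by
  ext v e
  rw [hE, incidenceMatrix, Matrix.sub_apply, outIncidenceMatrix, outIncidenceMatrix, of_apply,
    of_apply]
  by_cases hv : v = tail e
  · have hve : v ≠ head e := hv ▸ hth e
    simp [hv, hv ▸ hve]
  · by_cases hve : v = head e <;> simp [hv, hve, (hth e).symm]

theorem outIncidenceMatrix_map {R S : Type*} [Ring R] [Ring S] (f : R →+* S) (tail : ε → V) :
    (outIncidenceMatrix R tail).map f = outIncidenceMatrix S tail := by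
  ext v e
  rw [map_apply, outIncidenceMatrix, outIncidenceMatrix, of_apply, of_apply, apply_ite f, map_one,
    map_zero]

theorem incidenceMatrix_map {R S : Type*} [Ring R] [Ring S] (f : R →+* S) (tail head : ε → V) :
    (incidenceMatrix R tail head).map f = incidenceMatrix S tail head := by
  rw [incidenceMatrix, Matrix.map_sub _ (map_sub f), outIncidenceMatrix_map, outIncidenceMatrix_map,
    incidenceMatrix]

variable [Fintype V]

theorem incidenceMatrix_transpose_mulVec {K : Type*} [Ring K] (tail head : ε → V) (z : V → K) :
    (incidenceMatrix K tail head)ᵀ *ᵥ z = fun e => z (tail e) - z (head e) := by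
  ext e
  simp [incidenceMatrix, outIncidenceMatrix, mulVec, dotProduct, sub_mul]

theorem eq_of_incidenceMatrix_transpose_mulVec_eq_zero {K : Type*} [Ring K] {tail head : ε → V}
    {z : V → K} (hz : (incidenceMatrix K tail head)ᵀ *ᵥ z = 0) {u v : V}
    (huv : Relation.ReflTransGen (fun a b => ∃ e, tail e = a ∧ head e = b) u v) : z u = z v := by
  refine eq_of_reflTransGen ?_ huv
  rintro _ _ ⟨e, rfl, rfl⟩
  rw [incidenceMatrix_transpose_mulVec] at hz
  exact sub_eq_zero.mp (congrFun hz e)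

theorem eq_of_transpose_mulVec_eq_zero_of_mul_eq_incidenceMatrix [Fintype ι] {K : Type*}
    [CommRing K] {tail head : ε → V} {B : Matrix V ι K} {R : Matrix ι ε K}
    (hBR : B * R = incidenceMatrix K tail head) {z : V → K} (hz : Bᵀ *ᵥ z = 0) {u v : V}
    (huv : Relation.ReflTransGen (fun a b => ∃ e, tail e = a ∧ head e = b) u v) : z u = z v := by
  refine eq_of_incidenceMatrix_transpose_mulVec_eq_zero ?_ huv
  rw [← hBR, transpose_mul, ← mulVec_mulVec, hz, mulVec_zero]

theorem incidenceMatrix_comp_mul_eq [Fintype ι] [DecidableEq ι] {κ : Type*} {tail head : ε → V}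
    {τ : ι → ε} {c : κ → ε} (hτc : ∀ e, e ∈ Set.range τ ∨ e ∈ Set.range c)
    (hcard : Fintype.card V = Fintype.card ι + 1) {r : V}
    (hr : ∀ u, Relation.ReflTransGen (fun a b => ∃ i, tail (τ i) = a ∧ head (τ i) = b) u r)
    {B : Matrix V ι ℝ} (hB : B = incidenceMatrix ℝ (tail ∘ τ) (head ∘ τ)) {R : Matrix ι ε ℝ}
    (hRτ : R.submatrix id τ = 1)
    (hRc : R.submatrix id c =
      (Bᵀ * B)⁻¹ * Bᵀ * (incidenceMatrix ℝ tail head).submatrix id c) :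
    B * R = incidenceMatrix ℝ tail head := by
  have hker : ∀ z, Bᵀ *ᵥ z = 0 → ∀ v, z v = z r := fun z hz v =>
    eq_of_incidenceMatrix_transpose_mulVec_eq_zero (hB ▸ hz) (hr v)
  have hgram : IsUnit (Bᵀ * B) := isUnit_transpose_mul_self_of_surjective _
    (mulVec_surjective_of_ker_le_const _ hcard r hker)
  refine mul_eq_of_column_blocks hτc hB hgram (fun z hz => ?_) hRτ hRc
  rw [incidenceMatrix_transpose_mulVec]
  exact funext fun e => sub_eq_zero.mpr ((hker z hz _).trans (hker z hz _).symm)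

variable [Fintype ε] [DecidableEq ε]

/-- The matrix `A W Eᵀ` of the out-degree Laplacian. -/
def outLaplacianMatrix {R : Type*} [Ring R] (tail head : ε → V) (w : ε → R) : Matrix V V R :=
  outIncidenceMatrix R tail * diagonal w * (incidenceMatrix R tail head)ᵀ

theorem outLaplacianMatrix_map_mulVec {R K : Type*} [CommRing R] [Ring K] [Algebra R K]
    (tail head : ε → V) (w : ε → R) (y : V → K) :
    (outLaplacianMatrix tail head w).map (algebraMap R K) *ᵥ y = outLaplacian tail head w y := by
  rw [outLaplacianMatrix, Matrix.map_mul, transpose_map, incidenceMatrix_map, ← mulVec_mulVec,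
    incidenceMatrix_transpose_mulVec, Matrix.map_mul, outIncidenceMatrix_map,
    diagonal_map (map_zero _), ← mulVec_mulVec]
  ext v
  rw [outLaplacian, Finset.sum_filter]
  refine Finset.sum_congr rfl fun e _ => ?_
  rw [mulVec_diagonal, Algebra.smul_def]
  by_cases he : tail e = v
  · simp [outIncidenceMatrix, he]
  · simp [outIncidenceMatrix, he, Ne.symm he]

/-- The reduced edge Laplacian `Eτᵀ A W Rᵀ` on the edges selected by `τ`. It is meant for a matrix
`R` with `Eτ R = E`, which writes every edge in terms of the selected ones. -/
def reducedEdgeLaplacian (tail head : ε → V) (w : ε → ℝ) (τ : ι → ε) (R : Matrix ι ε ℝ) :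
    Matrix ι ι ℝ :=
  (incidenceMatrix ℝ (tail ∘ τ) (head ∘ τ))ᵀ * outIncidenceMatrix ℝ tail * diagonal w * Rᵀ

variable {tail head : ε → V} {w : ε → ℝ} {τ : ι → ε} {R : Matrix ι ε ℝ} [Fintype ι]

theorem reducedEdgeLaplacian_mul_incidenceMatrix_transpose
    (hR : incidenceMatrix ℝ (tail ∘ τ) (head ∘ τ) * R = incidenceMatrix ℝ tail head) :
    reducedEdgeLaplacian tail head w τ R * (incidenceMatrix ℝ (tail ∘ τ) (head ∘ τ))ᵀ =
      (incidenceMatrix ℝ (tail ∘ τ) (head ∘ τ))ᵀ * outLaplacianMatrix tail head w := by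
  have hRt := congrArg transpose hR
  rw [transpose_mul] at hRt
  simp only [reducedEdgeLaplacian, outLaplacianMatrix, Matrix.mul_assoc, hRt]

theorem reducedEdgeLaplacian_map_mulVec
    (hR : incidenceMatrix ℝ (tail ∘ τ) (head ∘ τ) * R = incidenceMatrix ℝ tail head) (y : V → ℂ) :
    (reducedEdgeLaplacian tail head w τ R).map Complex.ofReal *ᵥ
        (incidenceMatrix ℂ (tail ∘ τ) (head ∘ τ))ᵀ *ᵥ y =
      (incidenceMatrix ℂ (tail ∘ τ) (head ∘ τ))ᵀ *ᵥ outLaplacian tail head w y := by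
  rw [← incidenceMatrix_map (algebraMap ℝ ℂ) (tail ∘ τ), ← transpose_map, mulVec_mulVec,
    ← outLaplacianMatrix_map_mulVec, mulVec_mulVec, ← Matrix.map_mul,
    ← reducedEdgeLaplacian_mul_incidenceMatrix_transpose hR, Matrix.map_mul]
  rfl

theorem reducedEdgeLaplacian_eigenvalue_re_pos (hw : ∀ e, 0 ≤ w e) {r : V}
    (hr : ∀ u, Relation.ReflTransGen (fun a b => ∃ e, 0 < w e ∧ tail e = a ∧ head e = b) u r)
    (hcard : Fintype.card V = Fintype.card ι + 1)
    (hR : incidenceMatrix ℝ (tail ∘ τ) (head ∘ τ) * R = incidenceMatrix ℝ tail head) {μ : ℂ}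
    {x : ι → ℂ} (hx0 : x ≠ 0)
    (hx : (reducedEdgeLaplacian tail head w τ R).map Complex.ofReal *ᵥ x = μ • x) : 0 < μ.re := by
  have hr' : ∀ u, Relation.ReflTransGen (fun a b => ∃ e, tail e = a ∧ head e = b) u r := fun u =>
    Relation.ReflTransGen.mono (fun _ _ ⟨e, _, he⟩ => ⟨e, he⟩) _ _ (hr u)
  have hRC : incidenceMatrix ℂ (tail ∘ τ) (head ∘ τ) * R.map (algebraMap ℝ ℂ) =
      incidenceMatrix ℂ tail head := by
    simpa only [Matrix.map_mul, incidenceMatrix_map] using congrArg (·.map (algebraMap ℝ ℂ)) hR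
  have hker : ∀ z, (incidenceMatrix ℂ (tail ∘ τ) (head ∘ τ))ᵀ *ᵥ z = 0 → ∀ v, z v = z r :=
    fun z hz v => eq_of_transpose_mulVec_eq_zero_of_mul_eq_incidenceMatrix hRC hz (hr' v)
  obtain ⟨y, rfl⟩ := mulVec_surjective_of_ker_le_const _ hcard r hker x
  have hconst := hker (outLaplacian tail head w y - μ • y) (by
    rw [mulVec_sub, ← reducedEdgeLaplacian_map_mulVec hR, mulVec_smul, hx, sub_self])
  have hdiff : ∀ u v, outLaplacian tail head w y u - outLaplacian tail head w y v =
      μ * (y u - y v) := by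
    intro u v
    have huv := (hconst u).trans (hconst v).symm
    simp only [Pi.sub_apply, Pi.smul_apply, smul_eq_mul] at huv
    linear_combination huv
  by_contra! hμ
  have hy : ∀ a b, y a = y b := eq_of_inner_outLaplacian_nonpos hw hr fun u v => by
    rw [hdiff, real_inner_complex_mul_self]
    exact mul_nonpos_of_nonpos_of_nonneg hμ (sq_nonneg _)
  apply hx0
  simp only [incidenceMatrix_transpose_mulVec]
  exact funext fun i => sub_eq_zero.mpr (hy _ _)

theorem reduced_edgeLaplacian_eigenvalues_positive_real_part_general (tail head : ε → V)
    (w : ε → ℝ) (hw : ∀ e, 0 ≤ w e)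
    (hgr : ∃ r, ∀ u,
      Relation.ReflTransGen (fun a b => ∃ e, 0 < w e ∧ tail e = a ∧ head e = b) u r)
    [DecidableEq ι] (τ : ι → ε) (hcard : Fintype.card V = Fintype.card ι + 1) (R : Matrix ι ε ℝ)
    (hR : incidenceMatrix ℝ (tail ∘ τ) (head ∘ τ) * R = incidenceMatrix ℝ tail head) :
    IsUnit (reducedEdgeLaplacian tail head w τ R) ∧
    ∀ μ : ℂ, (∃ x : ι → ℂ, x ≠ 0 ∧
        (reducedEdgeLaplacian tail head w τ R).map Complex.ofReal *ᵥ x = μ • x) → 0 < μ.re := by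
  obtain ⟨r, hr⟩ := hgr
  have hpos : ∀ μ : ℂ, (∃ x : ι → ℂ, x ≠ 0 ∧
      (reducedEdgeLaplacian tail head w τ R).map Complex.ofReal *ᵥ x = μ • x) → 0 < μ.re :=
    fun μ ⟨x, hx0, hx⟩ => reducedEdgeLaplacian_eigenvalue_re_pos hw hr hcard hR hx0 hx
  exact ⟨isUnit_of_forall_eigenvalue_re_pos _ hpos, hpos⟩

end Incidence

/-- For a weighted digraph with positive weights, a globally reachable
vertex, and whose first `n-1` edges form a rooted in-branching with root the vertex
`n-1`, the reduced edge Laplacian `Eτᵀ * A * W * Rᵀ` is invertible and all of its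
complex eigenvalues have strictly positive real part. -/
theorem reduced_edgeLaplacian_eigenvalues_positive_real_part
    (n m : ℕ) (hn : 2 ≤ n) (hm : 1 ≤ m) (hmn : n - 1 ≤ m)
    (tail head : Fin m → Fin n) (hth : ∀ e, tail e ≠ head e)
    (w : Fin m → ℝ) (hw : ∀ e, 0 < w e)
    (E : Matrix (Fin n) (Fin m) ℝ)
    (hE : ∀ v e, E v e = if v = tail e then 1 else if v = head e then -1 else 0)
    (A : Matrix (Fin n) (Fin m) ℝ)
    (hA : ∀ v e, A v e = if v = tail e then 1 else 0)
    (W : Matrix (Fin m) (Fin m) ℝ) (hW : W = Matrix.diagonal w)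
    (hgr : ∃ v : Fin n, ∀ u : Fin n,
      Relation.ReflTransGen (fun a b => ∃ e, tail e = a ∧ head e = b) u v)
    (root : Fin n) (hroot : root = ⟨n - 1, by omega⟩)
    -- the first n-1 edges form a rooted in-branching with root `root`:
    (hinj : Function.Injective (fun i : Fin (n - 1) => tail ⟨i.val, lt_of_lt_of_le i.2 hmn⟩))
    (hnotroot : ∀ i : Fin (n - 1), tail ⟨i.val, lt_of_lt_of_le i.2 hmn⟩ ≠ root)
    (hsurj : ∀ v : Fin n, v ≠ root → ∃ i : Fin (n - 1), tail ⟨i.val, lt_of_lt_of_le i.2 hmn⟩ = v)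
    (hreach : ∀ v : Fin n, Relation.ReflTransGen
      (fun a b => ∃ e : Fin m, e.val < n - 1 ∧ tail e = a ∧ head e = b) v root)
    (Eτ : Matrix (Fin n) (Fin (n - 1)) ℝ)
    (hEτ : Eτ = E.submatrix id (fun i : Fin (n - 1) => ⟨i.val, lt_of_lt_of_le i.2 hmn⟩))
    (Ec : Matrix (Fin n) (Fin (m - (n - 1))) ℝ)
    (hEc : Ec = E.submatrix id
      (fun j : Fin (m - (n - 1)) => ⟨n - 1 + j.val, by have := j.2; omega⟩))
    (Tτ : Matrix (Fin (n - 1)) (Fin (m - (n - 1))) ℝ)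
    (hTτ : Tτ = (Eτᵀ * Eτ)⁻¹ * Eτᵀ * Ec)
    (R : Matrix (Fin (n - 1)) (Fin m) ℝ)
    (hR : ∀ (i : Fin (n - 1)) (j : Fin m), R i j =
      if h : j.val < n - 1 then (if i.val = j.val then 1 else 0)
      else Tτ i ⟨j.val - (n - 1), by have := j.2; omega⟩) :
    IsUnit (Eτᵀ * A * W * Rᵀ) ∧
    ∀ μ : ℂ, (∃ x : Fin (n - 1) → ℂ, x ≠ 0 ∧
        ((Eτᵀ * A * W * Rᵀ).map Complex.ofReal).mulVec x = μ • x) →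
      0 < μ.re := by
  obtain rfl : E = incidenceMatrix ℝ tail head := eq_incidenceMatrix hth hE
  obtain rfl : A = outIncidenceMatrix ℝ tail := Matrix.ext hA
  subst hW hEc hTτ
  let τ : Fin (n - 1) → Fin m := fun i => ⟨i, i.2.trans_le hmn⟩
  let c : Fin (m - (n - 1)) → Fin m := fun j => ⟨n - 1 + j, by omega⟩
  have hτc : ∀ e, e ∈ Set.range τ ∨ e ∈ Set.range c := fun e =>
    (lt_or_ge e.val (n - 1)).imp (fun he => ⟨⟨e, he⟩, rfl⟩)
      fun he => ⟨⟨e - (n - 1), by omega⟩, Fin.ext (Nat.add_sub_cancel' he)⟩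
  have hcard : Fintype.card (Fin n) = Fintype.card (Fin (n - 1)) + 1 := by
    simp only [Fintype.card_fin]
    omega
  have hτreach : ∀ u, Relation.ReflTransGen
      (fun a b => ∃ i, tail (τ i) = a ∧ head (τ i) = b) u root := fun u =>
    Relation.ReflTransGen.mono (fun _ _ ⟨e, he, hab⟩ => ⟨⟨e, he⟩, hab⟩) _ _ (hreach u)
  have hER : Eτ * R = incidenceMatrix ℝ tail head := by
    refine incidenceMatrix_comp_mul_eq hτc hcard hτreach hEτ ?_ ?_
    · ext i j
      simp [hR, τ, one_apply, Fin.ext_iff]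
    · ext i j
      simp [hR, c]
  subst hEτ
  exact reduced_edgeLaplacian_eigenvalues_positive_real_part_general tail head w
    (fun e => (hw e).le) (by simpa only [hw, true_and] using hgr) τ hcard R hER
end
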